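/- Let Q be a finite quasigroup and suppose the track φ_k is special. Then φ_k(k) = α(φ_k(k)) for every automorphism α of Q. -/

import Mathlib

/-!
An automorphism `α` conjugates the track of `i` into the track of `α i`. A special track is
conjugate to no other one, so if `φ k` is special, then `α k = k`. Hence `α` commutes with `φ k`,
and evaluating at the fixed point `k` gives the claim.
-/

/-- `σ` is the track (right middle translation) of the element `i`. In a left cancellative magma it
is determined by `i`. -/
def IsTrack {Q : Type*} [Mul Q] (σ : Equiv.Perm Q) (i : Q) : Prop :=
  ∀ x, x * σ x = i

/-- The member `φ k` of a family of permutations is special. Conjugacy stands in for equality of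
cycle types, with which it agrees on a finite type, so that infinite types are covered. -/
def IsSpecial {ι Q : Type*} (φ : ι → Equiv.Perm Q) (k : ι) : Prop :=
  ∀ i, i ≠ k → ¬ IsConj (φ i) (φ k)

theorem isSpecial_iff_cycleType_ne {ι Q : Type*} [Fintype Q] [DecidableEq Q]
    {φ : ι → Equiv.Perm Q} {k : ι} :
    IsSpecial φ k ↔ ∀ i, i ≠ k → (φ i).cycleType ≠ (φ k).cycleType := by
  simp only [IsSpecial, Equiv.Perm.isConj_iff_cycleType_eq, ne_eq]

theorem IsTrack.map_apply {M N F : Type*} [Mul M] [Mul N] [IsLeftCancelMul N] [FunLike F M N]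
    [MulHomClass F M N] {σ : Equiv.Perm M} {τ : Equiv.Perm N} {i : M} {f : F}
    (hσ : IsTrack σ i) (hτ : IsTrack τ (f i)) (x : M) : f (σ x) = τ (f x) :=
  mul_left_cancel <| calc
    f x * f (σ x) = f (x * σ x) := (map_mul f x (σ x)).symm
    _ = f i := by rw [hσ x]
    _ = f x * τ (f x) := (hτ (f x)).symm

section LeftCancel

variable {Q : Type*} [Mul Q] [IsLeftCancelMul Q]

theorem IsTrack.isConj {σ τ : Equiv.Perm Q} {i : Q} {α : Q ≃* Q}
    (hσ : IsTrack σ i) (hτ : IsTrack τ (α i)) : IsConj σ τ := by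
  refine isConj_iff.mpr ⟨α.toEquiv, mul_inv_eq_iff_eq_mul.mpr ?_⟩
  ext x
  exact hσ.map_apply hτ x

theorem IsSpecial.map_eq_self {φ : Q → Equiv.Perm Q} {k : Q} (hk : IsSpecial φ k)
    (hφ : ∀ i, IsTrack (φ i) i) (α : Q ≃* Q) : α k = k := by
  by_contra hne
  exact hk (α k) hne ((hφ k).isConj (hφ (α k))).symm

theorem special_track_value_fixed_general (φ : Q → Equiv.Perm Q) (hφ : ∀ i, IsTrack (φ i) i)
    (k : Q) (hk : IsSpecial φ k) (α : Q ≃* Q) : φ k k = α (φ k k) := by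
  have hαk : α k = k := hk.map_eq_self hφ α
  have hφαk : IsTrack (φ k) (α k) := hαk.symm ▸ hφ k
  calc
    φ k k = φ k (α k) := by rw [hαk]
    _ = α (φ k k) := ((hφ k).map_apply hφαk k).symm

end LeftCancel

/-- If the track `φ k` of a finite quasigroup is special, then
`φ k k = α (φ k k)` for every automorphism `α`. -/
theorem special_track_value_fixed {Q : Type*} [Fintype Q] [DecidableEq Q] [Mul Q]
    (hL : ∀ a : Q, Function.Bijective (fun x : Q => a * x))
    (hR : ∀ a : Q, Function.Bijective (fun x : Q => x * a))
    (φ : Q → Equiv.Perm Q)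
    (hφ : ∀ i x : Q, x * φ i x = i)
    (k : Q)
    (hspec : ∀ i : Q, i ≠ k → (φ i).cycleType ≠ (φ k).cycleType)
    (α : Equiv.Perm Q)
    (hα : ∀ x y : Q, α (x * y) = α x * α y) :
    φ k k = α (φ k k) :=
  haveI : IsLeftCancelMul Q := ⟨fun a => (hL a).injective⟩
  special_track_value_fixed_general φ hφ k (isSpecial_iff_cycleType_ne.mpr hspec) ⟨α, hα⟩
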